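/- Assume the continuum hypothesis (2^ℵ₀ = ℵ₁). Then there exist sets of real numbers A and B, each satisfying S₁(B_Ω,B_Γ), such that A ∪ B does not satisfy binom(Ω,T) (that is, A ∪ B has a countable open ω-cover containing no τ-cover of A ∪ B). In particular, S₁(T,Γ) ≠ S₁(Ω,Γ) and S₁(B_T,B_Γ) ≠ S₁(B_Ω,B_Γ) as properties of sets of reals. -/

import Mathlib

open Set

namespace TauCoverPaper

/-- `a ⊆* b`: `a \ b` is finite. -/
def AlmostSubset (a b : Set ℕ) : Prop := (a \ b).Finite

/-- `Y` is linearly quasiordered by `⊆*`. -/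
def LinQuasi (Y : Set (Set ℕ)) : Prop :=
  ∀ a ∈ Y, ∀ b ∈ Y, AlmostSubset a b ∨ AlmostSubset b a

/-- `a` is a pseudo-intersection of the family `Y`. -/
def PseudoIntersection (a : Set ℕ) (Y : Set (Set ℕ)) : Prop :=
  a.Infinite ∧ ∀ b ∈ Y, AlmostSubset a b

/-- `Y` is centered: every nonempty finite subfamily has infinite intersection. -/
def Centered (Y : Set (Set ℕ)) : Prop :=
  ∀ F : Set (Set ℕ), F ⊆ Y → F.Finite → F.Nonempty → (⋂₀ F).Infinite

/-- A tower: a family of infinite subsets of `ℕ`, linearly quasiordered by `⊆*`,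
with no pseudo-intersection. -/
def IsTower (Y : Set (Set ℕ)) : Prop :=
  (∀ a ∈ Y, a.Infinite) ∧ LinQuasi Y ∧ ¬ ∃ a, PseudoIntersection a Y

variable {α : Type}

/-- A cover of the space `α`: the union is everything, and the whole space is
not a member. -/
def IsCover (𝒰 : Set (Set α)) : Prop := ⋃₀ 𝒰 = univ ∧ univ ∉ 𝒰

/-- A large cover: each point belongs to infinitely many members. -/
def IsLargeCover (𝒰 : Set (Set α)) : Prop :=
  IsCover 𝒰 ∧ ∀ x : α, {U ∈ 𝒰 | x ∈ U}.Infinite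

/-- An ω-cover: each finite set is contained in some member. -/
def IsOmegaCover (𝒰 : Set (Set α)) : Prop :=
  IsCover 𝒰 ∧ ∀ F : Set α, F.Finite → ∃ U ∈ 𝒰, F ⊆ U

/-- A γ-cover: infinite, and each point belongs to all but finitely many members. -/
def IsGammaCover (𝒰 : Set (Set α)) : Prop :=
  IsCover 𝒰 ∧ 𝒰.Infinite ∧ ∀ x : α, {U ∈ 𝒰 | x ∉ U}.Finite

/-- A τ-cover: a large cover such that for all `x, y`, one of the sets
`{U : x ∈ U, y ∉ U}`, `{U : y ∈ U, x ∉ U}` is finite. -/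
def IsTauCover (𝒰 : Set (Set α)) : Prop :=
  IsLargeCover 𝒰 ∧ ∀ x y : α,
    {U ∈ 𝒰 | x ∈ U ∧ y ∉ U}.Finite ∨ {U ∈ 𝒰 | y ∈ U ∧ x ∉ U}.Finite

/-- A τ*-cover: a large, countably infinite cover which, enumerated bijectively
as `⟨Uₙ⟩`, admits for each point `y` an infinite `r y ⊆ {n | y ∈ Uₙ}` such that
the family `{r y}` is linearly quasiordered by `⊆*`. -/
def IsTauStarCover (𝒰 : Set (Set α)) : Prop :=
  IsLargeCover 𝒰 ∧
  ∃ U : ℕ → Set α, Function.Injective U ∧ Set.range U = 𝒰 ∧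
    ∃ r : α → Set ℕ,
      (∀ y : α, (r y).Infinite ∧ r y ⊆ {n | y ∈ U n}) ∧
      (∀ y z : α, AlmostSubset (r y) (r z) ∨ AlmostSubset (r z) (r y))

/-- Ω : countable open ω-covers. -/
def OpenOmega (α : Type) [TopologicalSpace α] : Set (Set (Set α)) :=
  {𝒰 | 𝒰.Countable ∧ (∀ U ∈ 𝒰, IsOpen U) ∧ IsOmegaCover 𝒰}

/-- Γ : countable open γ-covers. -/
def OpenGamma (α : Type) [TopologicalSpace α] : Set (Set (Set α)) :=
  {𝒰 | 𝒰.Countable ∧ (∀ U ∈ 𝒰, IsOpen U) ∧ IsGammaCover 𝒰}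

/-- T : countable open τ-covers. -/
def OpenTau (α : Type) [TopologicalSpace α] : Set (Set (Set α)) :=
  {𝒰 | 𝒰.Countable ∧ (∀ U ∈ 𝒰, IsOpen U) ∧ IsTauCover 𝒰}

/-- T* : countable open τ*-covers. -/
def OpenTauStar (α : Type) [TopologicalSpace α] : Set (Set (Set α)) :=
  {𝒰 | 𝒰.Countable ∧ (∀ U ∈ 𝒰, IsOpen U) ∧ IsTauStarCover 𝒰}

/-- B_Ω : countable Borel ω-covers. -/
def BorelOmega (α : Type) [MeasurableSpace α] : Set (Set (Set α)) :=
  {𝒰 | 𝒰.Countable ∧ (∀ U ∈ 𝒰, MeasurableSet U) ∧ IsOmegaCover 𝒰}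

/-- B_Γ : countable Borel γ-covers. -/
def BorelGamma (α : Type) [MeasurableSpace α] : Set (Set (Set α)) :=
  {𝒰 | 𝒰.Countable ∧ (∀ U ∈ 𝒰, MeasurableSet U) ∧ IsGammaCover 𝒰}

/-- B_T : countable Borel τ-covers. -/
def BorelTau (α : Type) [MeasurableSpace α] : Set (Set (Set α)) :=
  {𝒰 | 𝒰.Countable ∧ (∀ U ∈ 𝒰, MeasurableSet U) ∧ IsTauCover 𝒰}

/-- The selection principle S₁(𝔘,𝔙). -/
def S1 (𝔘 𝔙 : Set (Set (Set α))) : Prop :=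
  ∀ 𝒰 : ℕ → Set (Set α), (∀ n, 𝒰 n ∈ 𝔘) →
    ∃ V : ℕ → Set α, (∀ n, V n ∈ 𝒰 n) ∧ Set.range V ∈ 𝔙

/-- The selection principle Sfin(𝔘,𝔙). -/
def Sfin (𝔘 𝔙 : Set (Set (Set α))) : Prop :=
  ∀ 𝒰 : ℕ → Set (Set α), (∀ n, 𝒰 n ∈ 𝔘) →
    ∃ F : ℕ → Set (Set α), (∀ n, (F n).Finite ∧ F n ⊆ 𝒰 n) ∧ (⋃ n, F n) ∈ 𝔙

/-- The selection principle Ufin(𝔘,𝔙). -/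
def Ufin (𝔘 𝔙 : Set (Set (Set α))) : Prop :=
  ∀ 𝒰 : ℕ → Set (Set α), (∀ n, 𝒰 n ∈ 𝔘) →
    (∀ n, ¬ ∃ F : Set (Set α), F ⊆ 𝒰 n ∧ F.Finite ∧ ⋃₀ F = univ) →
    ∃ F : ℕ → Set (Set α), (∀ n, (F n).Finite ∧ F n ⊆ 𝒰 n) ∧
      Set.range (fun n => ⋃₀ (F n)) ∈ 𝔙

/-- binom(𝔘,𝔙): each member of 𝔘 contains a subfamily belonging to 𝔙. -/
def Binom (𝔘 𝔙 : Set (Set (Set α))) : Prop :=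
  ∀ 𝒰 ∈ 𝔘, ∃ 𝒱 ⊆ 𝒰, 𝒱 ∈ 𝔙

/-- Borel measurability of a map into `P(ℕ)` (identified with the Cantor
space via characteristic functions): each coordinate is measurable. -/
def BorelMeasSets {β : Type} [MeasurableSpace β] (f : β → Set ℕ) : Prop :=
  ∀ n : ℕ, MeasurableSet {x | n ∈ f x}

/-- The excluded middle property for a family `Y ⊆ ℕ^ℕ`. -/
def ExcludedMiddleProp (Y : Set (ℕ → ℕ)) : Prop :=
  ∃ g : ℕ → ℕ,
    (∀ f ∈ Y, {n | f n < g n}.Infinite) ∧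
    ∀ f ∈ Y, ∀ h ∈ Y,
      {n | f n < g n ∧ g n ≤ h n}.Finite ∨ {n | h n < g n ∧ g n ≤ f n}.Finite

/-- non(J): the minimal cardinality of a set of reals not satisfying `J`. -/
noncomputable def nonCard (J : Set ℝ → Prop) : Cardinal :=
  sInf {c : Cardinal | ∃ X : Set ℝ, ¬ J X ∧ Cardinal.mk ↥X = c}

/-- add(J): the minimal cardinality of a family of sets of reals, each
satisfying `J`, whose union does not satisfy `J`. -/
noncomputable def addCard (J : Set ℝ → Prop) : Cardinal :=
  sInf {c : Cardinal | ∃ 𝔉 : Set (Set ℝ),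
    (∀ A ∈ 𝔉, J A) ∧ ¬ J (⋃₀ 𝔉) ∧ Cardinal.mk ↥𝔉 = c}

/-- 𝔱 : the minimal cardinality of a tower. -/
noncomputable def towerCard : Cardinal :=
  sInf {c : Cardinal | ∃ Y : Set (Set ℕ), IsTower Y ∧ Cardinal.mk ↥Y = c}

/-!
Under CH one builds disjoint subsets `A`, `B` of the Cantor space which both satisfy S₁(B_Ω,B_Γ)
although no Borel set separates them. On the union of the disjoint copies `A × {0}` and `B × {1}`
each clopen set `C` induces the clopen set `(A ∩ C) × {0} ∪ (B \ C) × {1}`, and these form an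
ω-cover, since finite sets are separated by clopen sets. On the other hand, on a union of two sets
satisfying S₁(B_Ω,B_Γ), every countable Borel τ-cover contains a sequence `Vₙ` such that each point
lies in almost all `Vₙ`. Hence the union satisfies S₁(B_T,B_Γ), and a τ-subcover of the above
ω-cover would yield clopen sets `Cₙ` such that `liminf Cₙ` separates `A` from `B`.

The construction of `A` and `B` is a transfinite recursion of length ω₁ over countable
approximations. Each of them promises that all points added later agree, up to finitely many
coordinates, with a fixed partial function having infinitely many free coordinates (a Silver
condition). Given a matrix of Borel sets, either countably many new points can be added to `A` so
that some row is no longer an ω-cover of `A`, or a fusion argument strengthens the promise so that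
a γ-selection works for all old points and all points still allowed.
-/

section Selection

open Filter

variable {X Y : Type*} {U : ℕ → ℕ → Set X} {A B : Set X}

/-- Every row of the matrix `U` is an ω-cover of `A`; unlike in `IsOmegaCover`, a row may also
contain supersets of `A`. -/
def OmegaRows (U : ℕ → ℕ → Set X) (A : Set X) : Prop :=
  ∀ n, ∀ S ⊆ A, S.Finite → ∃ k, S ⊆ U n k

/-- One can choose a set in each row of the matrix `U` so that every point of `A` belongs to all
but finitely many of the chosen sets. -/
def GammaSelectable (U : ℕ → ℕ → Set X) (A : Set X) : Prop :=
  ∃ g : ℕ → ℕ, ∀ y ∈ A, ∀ᶠ n in atTop, y ∈ U n (g n)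

theorem OmegaRows.mono (h : OmegaRows U A) (hBA : B ⊆ A) : OmegaRows U B :=
  fun n S hS => h n S (hS.trans hBA)

theorem GammaSelectable.mono (h : GammaSelectable U A) (hBA : B ⊆ A) : GammaSelectable U B :=
  h.imp fun _ hg y hy => hg y (hBA hy)

theorem GammaSelectable.union_of_monotone (hU : ∀ n, Monotone (U n))
    (hA : GammaSelectable U A) (hB : GammaSelectable U B) : GammaSelectable U (A ∪ B) := by
  obtain ⟨g, hg⟩ := hA
  obtain ⟨h, hh⟩ := hB
  refine ⟨fun n => max (g n) (h n), fun y hy => ?_⟩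
  rcases hy with hy | hy
  · exact (hg y hy).mono fun n hn => hU n (le_max_left _ _) hn
  · exact (hh y hy).mono fun n hn => hU n (le_max_right _ _) hn

/-- The selection principle S₁(B_Ω, B_Γ) for a subset `A` of an ambient measurable space, tested
on matrices of measurable sets of the ambient space. -/
def IsBorelGammaSet [MeasurableSpace X] (A : Set X) : Prop :=
  ∀ U : ℕ → ℕ → Set X, (∀ n k, MeasurableSet (U n k)) → OmegaRows U A → GammaSelectable U A

theorem IsBorelGammaSet.image [MeasurableSpace X] [MeasurableSpace Y] (hA : IsBorelGammaSet A)
    {f : X → Y} (hf : Measurable f) : IsBorelGammaSet (f '' A) := by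
  intro V hV hVA
  have hrows : OmegaRows (fun n k => f ⁻¹' V n k) A := fun n S hSA hS =>
    (hVA n (f '' S) (image_mono hSA) (hS.image f)).imp fun _ => image_subset_iff.1
  obtain ⟨g, hg⟩ := hA _ (fun n k => hf (hV n k)) hrows
  exact ⟨g, forall_mem_image.2 hg⟩

theorem IsBorelGammaSet.preimage_val [MeasurableSpace X] (hA : IsBorelGammaSet A) {T : Set X}
    (hAT : A ⊆ T) : IsBorelGammaSet (Subtype.val ⁻¹' A : Set T) := by
  intro V hV hVA
  choose W hW hWV using hV
  have hrows : OmegaRows W A := by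
    intro n S hSA hS
    obtain ⟨k, hk⟩ := hVA n (Subtype.val ⁻¹' S) (preimage_mono hSA)
      (hS.preimage Subtype.val_injective.injOn)
    rw [← hWV] at hk
    exact ⟨k, fun y hy => @hk ⟨y, hAT (hSA hy)⟩ hy⟩
  obtain ⟨g, hg⟩ := hA W hW hrows
  refine ⟨g, fun y hy => ?_⟩
  simp only [← hWV]
  exact hg y hy

end Selection

section Covers

open Filter

variable {X : Type}

theorem isGammaCover_range {V : ℕ → Set X} (hV : ∀ n, V n ≠ univ)
    (hmem : ∀ x, ∀ᶠ n in atTop, x ∈ V n) : IsGammaCover (range V) := by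
  refine ⟨⟨?_, ?_⟩, fun hfin => ?_, fun x => ?_⟩
  · exact eq_univ_of_forall fun x =>
      have ⟨n, hn⟩ := (hmem x).exists
      ⟨V n, mem_range_self n, hn⟩
  · rintro ⟨n, hn⟩
    exact hV n hn
  · -- A finite set of points, one outside each member, would eventually be covered.
    have hproper : ∀ U : range V, ∃ x, x ∉ (U : Set X) := by
      rintro ⟨_, n, rfl⟩
      exact (ne_univ_iff_exists_notMem _).1 (hV n)
    choose missed hmissed using hproper
    have : Finite (range V) := hfin
    obtain ⟨n, hn⟩ := (eventually_all.2 fun U => hmem (missed U)).exists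
    exact hmissed ⟨V n, mem_range_self n⟩ (hn _)
  · have hfin : {n | x ∉ V n}.Finite := by
      simpa only [← Nat.cofinite_eq_atTop, eventually_cofinite] using hmem x
    refine (hfin.image V).subset ?_
    rintro _ ⟨⟨n, rfl⟩, hn⟩
    exact mem_image_of_mem V hn

theorem IsGammaCover.isTauCover {𝒰 : Set (Set X)} (h : IsGammaCover 𝒰) : IsTauCover 𝒰 := by
  obtain ⟨hcover, hinf, hmem⟩ := h
  refine ⟨⟨hcover, fun x => ?_⟩, fun x y => Or.inl ((hmem y).subset fun U hU => ⟨hU.1, hU.2.2⟩)⟩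
  refine (hinf.sdiff (hmem x)).mono fun U hU => ⟨hU.1, ?_⟩
  by_contra hx
  exact hU.2 ⟨hU.1, hx⟩

theorem range_mem_borelGamma [MeasurableSpace X] {V : ℕ → Set X}
    (hmeas : ∀ n, MeasurableSet (V n)) (hV : ∀ n, V n ≠ univ)
    (hmem : ∀ x, ∀ᶠ n in atTop, x ∈ V n) : range V ∈ BorelGamma X :=
  ⟨countable_range V, forall_mem_range.2 hmeas, isGammaCover_range hV hmem⟩

theorem IsBorelGammaSet.s1_borelOmega_borelGamma [MeasurableSpace X]
    (h : IsBorelGammaSet (univ : Set X)) : S1 (BorelOmega X) (BorelGamma X) := by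
  intro 𝒰 h𝒰
  choose hcount hmeas hcover hfin using h𝒰
  have hne : ∀ n, (𝒰 n).Nonempty := fun n =>
    have ⟨U, hU, _⟩ := hfin n ∅ finite_empty
    ⟨U, hU⟩
  choose U hU using fun n => (hcount n).exists_eq_range (hne n)
  have hU𝒰 : ∀ n k, U n k ∈ 𝒰 n := fun n k => hU n ▸ mem_range_self k
  have hrows : OmegaRows U univ := by
    intro n S _ hS
    obtain ⟨_, hV, hSV⟩ := hfin n S hS
    rw [hU n] at hV
    obtain ⟨k, rfl⟩ := hV
    exact ⟨k, hSV⟩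
  obtain ⟨g, hg⟩ := h U (fun n k => hmeas n _ (hU𝒰 n k)) hrows
  refine ⟨fun n => U n (g n), fun n => hU𝒰 n _, range_mem_borelGamma (fun n => hmeas n _ (hU𝒰 n _))
    (fun n => ne_of_mem_of_not_mem (hU𝒰 n _) (hcover n).2) fun x => hg x (mem_univ x)⟩

theorem IsBorelGammaSet.s1_borelOmega_borelGamma_coe [MeasurableSpace X] {A : Set X}
    (hA : IsBorelGammaSet A) : S1 (BorelOmega A) (BorelGamma A) := by
  have h := hA.preimage_val subset_rfl
  rw [Subtype.coe_preimage_self] at h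
  exact h.s1_borelOmega_borelGamma

theorem openOmega_subset_borelOmega [TopologicalSpace X] [MeasurableSpace X]
    [OpensMeasurableSpace X] : OpenOmega X ⊆ BorelOmega X :=
  fun _ h => ⟨h.1, fun U hU => (h.2.1 U hU).measurableSet, h.2.2⟩

theorem openTau_subset_borelTau [TopologicalSpace X] [MeasurableSpace X]
    [OpensMeasurableSpace X] : OpenTau X ⊆ BorelTau X :=
  fun _ h => ⟨h.1, fun U hU => (h.2.1 U hU).measurableSet, h.2.2⟩

theorem S1.openGamma_of_borelGamma [TopologicalSpace X] [MeasurableSpace X]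
    {𝔘 𝔘' : Set (Set (Set X))} (h : S1 𝔘' (BorelGamma X)) (h𝔘 : 𝔘 ⊆ 𝔘')
    (hopen : ∀ 𝒰 ∈ 𝔘, ∀ U ∈ 𝒰, IsOpen U) : S1 𝔘 (OpenGamma X) := by
  intro 𝒰 h𝒰
  obtain ⟨V, hV, hcount, -, hγ⟩ := h 𝒰 fun n => h𝔘 (h𝒰 n)
  exact ⟨V, hV, hcount, forall_mem_range.2 fun n => hopen _ (h𝒰 n) _ (hV n), hγ⟩

theorem S1.binom_openOmega_openTau [TopologicalSpace X] (h : S1 (OpenOmega X) (OpenGamma X)) :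
    Binom (OpenOmega X) (OpenTau X) := by
  intro 𝒰 h𝒰
  obtain ⟨V, hV, hcount, hopen, hγ⟩ := h (fun _ => 𝒰) fun _ => h𝒰
  exact ⟨range V, range_subset_iff.2 hV, hcount, hopen, hγ.isTauCover⟩

end Covers

section TauSequences

open Filter

/-- A sequence of sets which, like an enumeration of a τ-cover, contains every point infinitely
often and whose membership traces are linearly quasiordered by almost inclusion. -/
def IsTauSequence {X : Type*} (u : ℕ → Set X) : Prop :=
  (∀ x, ∃ᶠ k in atTop, x ∈ u k) ∧
    ∀ x y, (∀ᶠ k in atTop, x ∈ u k → y ∈ u k) ∨ ∀ᶠ k in atTop, y ∈ u k → x ∈ u k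

theorem IsTauCover.exists_isTauSequence {X : Type} [Nonempty X] {𝒰 : Set (Set X)}
    (h : IsTauCover 𝒰) (hcount : 𝒰.Countable) :
    ∃ u : ℕ → Set X, (∀ k, u k ∈ 𝒰) ∧ IsTauSequence u := by
  obtain ⟨⟨-, hlarge⟩, hlin⟩ := h
  have hinf : 𝒰.Infinite := (hlarge (Classical.arbitrary X)).mono fun U hU => hU.1
  obtain ⟨_⟩ := countable_infinite_iff_nonempty_denumerable.1 ⟨hcount, hinf⟩
  let e : ℕ ≃ 𝒰 := (Denumerable.eqv 𝒰).symm
  have hinj : Function.Injective fun k => (e k : Set X) := Subtype.val_injective.comp e.injective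
  refine ⟨fun k => e k, fun k => (e k).2, fun x => ?_, fun x y => ?_⟩
  · rw [Nat.frequently_atTop_iff_infinite]
    refine Infinite.of_image (fun k => (e k : Set X)) ((hlarge x).mono fun U hU => ?_)
    exact ⟨e.symm ⟨U, hU.1⟩, by simpa using hU.2, by simp⟩
  · simp only [← Nat.cofinite_eq_atTop, eventually_cofinite, Classical.not_imp]
    refine (hlin x y).imp (fun hfin => ?_) fun hfin => ?_
    all_goals exact (hfin.preimage hinj.injOn).subset fun k hk => ⟨(e k).2, hk⟩

section

variable {X : Type*} {u : ℕ → Set X} {A B : Set X}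

theorem IsTauSequence.frequently_superset (hu : IsTauSequence u) {S : Set X} (hS : S.Finite) :
    ∃ᶠ k in atTop, S ⊆ u k := by
  rcases S.eq_empty_or_nonempty with rfl | ⟨x₀, -⟩
  · exact (Eventually.of_forall fun k => empty_subset (u k)).frequently
  have : Nonempty X := ⟨x₀⟩
  let r : X → X → Prop := fun x y => ∀ᶠ k in atTop, y ∈ u k → x ∈ u k
  have : IsTrans X r := ⟨fun x y z hxy hyz => by
    filter_upwards [hxy, hyz] with k h₁ h₂ hz using h₁ (h₂ hz)⟩
  have hrefl : ∀ x, r x x := fun x => .of_forall fun _ => id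
  have hdir : Directed r (id : X → X) := fun x y =>
    (hu.2 x y).elim (fun h => ⟨x, hrefl x, h⟩) fun h => ⟨y, h, hrefl y⟩
  obtain ⟨z, hz⟩ := hdir.finite_set_le hS
  exact ((hu.1 z).and_eventually ((eventually_all_finite hS).2 hz)).mono
    fun k hk x hx => hk.2 x hx hk.1

theorem IsBorelGammaSet.exists_subseq [MeasurableSpace X] (hA : IsBorelGammaSet A)
    (hu : IsTauSequence u) (hmeas : ∀ k, MeasurableSet (u k)) :
    ∃ c : ℕ → ℕ, Tendsto c atTop atTop ∧ ∀ x ∈ A, ∀ᶠ j in atTop, x ∈ u (c j) := by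
  have hrows : OmegaRows (fun j i => u (j + i)) A := by
    intro j S _ hS
    obtain ⟨k, hjk, hk⟩ := frequently_atTop.1 (hu.frequently_superset hS) j
    exact ⟨k - j, by simpa only [Nat.add_sub_cancel' hjk] using hk⟩
  obtain ⟨g, hg⟩ := hA _ (fun _ _ => hmeas _) hrows
  exact ⟨fun j => j + g j, tendsto_atTop_mono (fun j => Nat.le_add_right j _) tendsto_id, hg⟩

-- If some `x ∈ A` is almost below every point of `B`, a subsequence good for `A` is also good
-- for `B`; otherwise every point of `A` is almost above some point of `B`.
theorem IsTauSequence.exists_subseq_of_union_eq_univ [MeasurableSpace X] (hu : IsTauSequence u)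
    (hmeas : ∀ k, MeasurableSet (u k)) (hA : IsBorelGammaSet A) (hB : IsBorelGammaSet B)
    (hAB : A ∪ B = univ) : ∃ c : ℕ → ℕ, ∀ x, ∀ᶠ j in atTop, x ∈ u (c j) := by
  obtain ⟨c, hc, hcA⟩ := hA.exists_subseq hu hmeas
  obtain ⟨d, hd, hdB⟩ := hB.exists_subseq hu hmeas
  have hmem : ∀ x, x ∈ A ∨ x ∈ B := fun x => (hAB ▸ mem_univ x : x ∈ A ∪ B)
  by_cases hbelow : ∃ x ∈ A, ∀ y ∈ B, ∀ᶠ k in atTop, x ∈ u k → y ∈ u k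
  · obtain ⟨x, hx, hxB⟩ := hbelow
    exact ⟨c, fun y => (hmem y).elim (hcA y) fun hy =>
      (hcA x hx).mp (hc.eventually (hxB y hy))⟩
  · refine ⟨d, fun x => (hmem x).elim (fun hx => ?_) (hdB x)⟩
    obtain ⟨y, hy, hxy⟩ : ∃ y ∈ B, ¬ ∀ᶠ k in atTop, x ∈ u k → y ∈ u k := by
      by_contra! h
      exact hbelow ⟨x, hx, h⟩
    exact (hdB y hy).mp (hd.eventually ((hu.2 x y).resolve_left hxy))

end

variable {X : Type} [MeasurableSpace X] {A B : Set X}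

theorem exists_seq_of_mem_borelTau [Nonempty X] (hA : IsBorelGammaSet A) (hB : IsBorelGammaSet B)
    (hAB : A ∪ B = univ) {𝒰 : Set (Set X)} (h𝒰 : 𝒰 ∈ BorelTau X) :
    ∃ V : ℕ → Set X, (∀ n, V n ∈ 𝒰) ∧ ∀ x, ∀ᶠ n in atTop, x ∈ V n := by
  obtain ⟨hcount, hmeas, hτ⟩ := h𝒰
  obtain ⟨u, hu𝒰, hu⟩ := hτ.exists_isTauSequence hcount
  obtain ⟨c, hc⟩ := hu.exists_subseq_of_union_eq_univ (fun k => hmeas _ (hu𝒰 k)) hA hB hAB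
  exact ⟨u ∘ c, fun n => hu𝒰 _, hc⟩

theorem s1_borelTau_borelGamma_of_union_eq_univ [Nonempty X] (hA : IsBorelGammaSet A)
    (hB : IsBorelGammaSet B) (hAB : A ∪ B = univ) : S1 (BorelTau X) (BorelGamma X) := by
  intro 𝒰 h𝒰
  choose W hW𝒰 hW using fun n => exists_seq_of_mem_borelTau hA hB hAB (h𝒰 n)
  have hmeas : ∀ n k, MeasurableSet (W n k) := fun n k => (h𝒰 n).2.1 _ (hW𝒰 n k)
  let tail : ℕ → ℕ → Set X := fun n m => ⋂ k ≥ m, W n k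
  have htail_mono : ∀ n, Monotone (tail n) := fun n m m' hm =>
    biInter_subset_biInter_left fun k => hm.trans
  have htail_meas : ∀ n m, MeasurableSet (tail n m) := fun n m =>
    .biInter (to_countable _) fun k _ => hmeas n k
  have htail_rows : OmegaRows tail univ := by
    intro n S _ hS
    obtain ⟨m, hm⟩ := eventually_atTop.1 ((eventually_all_finite hS).2 fun x _ => hW n x)
    exact ⟨m, fun x hx => mem_iInter₂.2 fun k hk => hm k hk x hx⟩
  obtain ⟨g, hg⟩ := GammaSelectable.union_of_monotone htail_mono
    (hA _ htail_meas (htail_rows.mono (subset_univ _)))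
    (hB _ htail_meas (htail_rows.mono (subset_univ _)))
  refine ⟨fun n => W n (g n), fun n => hW𝒰 n _, range_mem_borelGamma (fun n => hmeas n _)
    (fun n => ne_of_mem_of_not_mem (hW𝒰 n _) (h𝒰 n).2.2.1.1.2) fun x => ?_⟩
  filter_upwards [hg x (hAB ▸ mem_univ x)] with n hn using mem_iInter₂.1 hn _ le_rfl

end TauSequences

section Sequences

open Filter

theorem exists_seq_succ {σ : Type*} {R : ℕ → σ → σ → Prop} (h : ∀ n s, ∃ t, R n s t) (s₀ : σ) :
    ∃ s : ℕ → σ, s 0 = s₀ ∧ ∀ n, R n (s n) (s (n + 1)) := by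
  choose f hf using h
  exact ⟨fun n => Nat.rec s₀ f n, rfl, fun n => hf n _⟩

theorem exists_mem_Ico_succ {M : ℕ → ℕ} (hM : StrictMono M) {j : ℕ} (hj : M 0 ≤ j) :
    ∃ n, j ∈ Ico (M n) (M (n + 1)) := by
  have hcover := iUnion_Ico_map_succ_eq_Ici (fun n => hM.monotone (Nat.zero_le n))
    (not_bddAbove_of_tendsto_atTop hM.tendsto_atTop)
  exact mem_iUnion.1 (hcover ▸ hj)

theorem le_of_mem_Ico_succ {M : ℕ → ℕ} (hM : StrictMono M) {i n j : ℕ} (hi : M i ≤ j)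
    (hn : j ∈ Ico (M n) (M (n + 1))) : i ≤ n :=
  Nat.lt_succ_iff.1 (hM.lt_iff_lt.1 (hi.trans_lt hn.2))

theorem exists_glue {β : Type*} {M : ℕ → ℕ} (hM : StrictMono M) (v₀ : ℕ → β) (v : ℕ → ℕ → β) :
    ∃ w : ℕ → β, (∀ j < M 0, w j = v₀ j) ∧ ∀ n, ∀ j ∈ Ico (M n) (M (n + 1)), w j = v n j := by
  have hblock : ∀ j, ∃ n, M 0 ≤ j → j ∈ Ico (M n) (M (n + 1)) := fun j => by
    by_cases hj : M 0 ≤ j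
    · exact (exists_mem_Ico_succ hM hj).imp fun _ h _ => h
    · exact ⟨0, fun h => absurd h hj⟩
  choose block hblock using hblock
  refine ⟨fun j => if j < M 0 then v₀ j else v (block j) j, fun j hj => if_pos hj,
    fun n j hj => ?_⟩
  have hj₀ : M 0 ≤ j := (hM.monotone (Nat.zero_le n)).trans hj.1
  have hn : block j = n := le_antisymm (le_of_mem_Ico_succ hM (hblock j hj₀).1 hj)
    (le_of_mem_Ico_succ hM hj.1 (hblock j hj₀))
  simp only [if_neg hj₀.not_gt, hn]

theorem exists_finite_exhaustion {X : Type*} {Q : Set X} (hQ : Q.Countable) :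
    ∃ F : ℕ → Set X, (∀ n, (F n).Finite ∧ F n ⊆ Q) ∧ ∀ y ∈ Q, ∀ᶠ n in atTop, y ∈ F n := by
  rcases Q.eq_empty_or_nonempty with rfl | hne
  · exact ⟨fun _ => ∅, by simp, by simp⟩
  · obtain ⟨f, rfl⟩ := hQ.exists_eq_range hne
    refine ⟨fun n => f '' Iic n, fun n => ⟨(finite_Iic n).image f, image_subset_range _ _⟩, ?_⟩
    rintro _ ⟨i, rfl⟩
    exact (eventually_ge_atTop i).mono fun n hn => mem_image_of_mem f hn

end Sequences

section CantorSpace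

open Filter Topology symmDiff

/-- The Cantor space. -/
abbrev Cantor : Type := ℕ → Bool

theorem exists_cylinder_subset {O : Set Cantor} (hO : IsOpen O) {x : Cantor} (hx : x ∈ O) :
    ∃ l, PiNat.cylinder x l ⊆ O := by
  obtain ⟨_, ⟨z, l, rfl⟩, hxz, hzO⟩ :=
    (PiNat.isTopologicalBasis_cylinders fun _ => Bool).exists_subset_of_mem_open hx hO
  exact ⟨l, PiNat.mem_cylinder_iff_eq.1 hxz ▸ hzO⟩

theorem continuous_symmDiff_right (s : Cantor) : Continuous (· ∆ s) :=
  continuous_pi fun j =>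
    (continuous_of_discreteTopology (f := (· ∆ s j))).comp (continuous_apply j)

theorem isOpenMap_symmDiff_right (s : Cantor) : IsOpenMap (· ∆ s) :=
  .of_inverse (continuous_symmDiff_right s) (symmDiff_symmDiff_cancel_right s)
    (symmDiff_symmDiff_cancel_right s)

/-- The points agreeing with `x` from the `m`-th coordinate on. -/
def tailSet (m : ℕ) (x : Cantor) : Set Cantor := {y | ∀ j ≥ m, y j = x j}

/-- The points agreeing with `x` at all but finitely many coordinates. -/
def tailClass (x : Cantor) : Set Cantor := ⋃ m, tailSet m x

theorem tailSet_finite (m : ℕ) (x : Cantor) : (tailSet m x).Finite := by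
  have hinj : InjOn (fun (y : Cantor) (i : Fin m) => y i) (tailSet m x) := by
    intro y hy z hz hyz
    funext j
    by_cases hj : j < m
    · exact congrFun hyz ⟨j, hj⟩
    · rw [hy j (not_lt.1 hj), hz j (not_lt.1 hj)]
  exact .of_finite_image (toFinite _) hinj

theorem tailClass_countable (x : Cantor) : (tailClass x).Countable :=
  countable_iUnion fun m => (tailSet_finite m x).countable

theorem mem_tailClass_comm {x y : Cantor} : y ∈ tailClass x ↔ x ∈ tailClass y := by
  simp only [tailClass, tailSet, mem_iUnion, mem_ofPred_eq, eq_comm]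

theorem tailSet_eq_image_symmDiff (m : ℕ) (x : Cantor) : tailSet m x = (x ∆ ·) '' tailSet m ⊥ := by
  ext y
  constructor
  · exact fun hy => ⟨x ∆ y, fun j hj => by simp [hy j hj], symmDiff_symmDiff_cancel_left x y⟩
  · rintro ⟨s, hs, rfl⟩ j hj
    simp [hs j hj]

-- Below `l` a coordinate vector has only finitely many values, so it suffices to find a point all
-- of whose modifications below `l` lie in `O`.
theorem exists_pattern {O : Set Cantor} (hO : IsOpen O) (hd : Dense O) (l : ℕ) :
    ∃ (l' : ℕ) (x : Cantor), ∀ y : Cantor, (∀ j ∈ Ico l l', y j = x j) → y ∈ O := by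
  have hfin : (tailSet l ⊥).Finite := tailSet_finite l ⊥
  have hdense : Dense (⋂ s ∈ tailSet l ⊥, (· ∆ s) ⁻¹' O) :=
    dense_biInter_of_isOpen (fun s _ => hO.preimage (continuous_symmDiff_right s)) hfin.countable
      fun s _ => hd.preimage (isOpenMap_symmDiff_right s)
  have hopen : IsOpen (⋂ s ∈ tailSet l ⊥, (· ∆ s) ⁻¹' O) :=
    hfin.isOpen_biInter fun s _ => hO.preimage (continuous_symmDiff_right s)
  obtain ⟨x, hx⟩ := hdense.nonempty
  obtain ⟨l', hl'⟩ := exists_cylinder_subset hopen hx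
  refine ⟨l', x, fun y hy => ?_⟩
  let s : Cantor := fun j => if j < l then y j ∆ x j else ⊥
  have hs : s ∈ tailSet l ⊥ := fun j hj => if_neg hj.not_gt
  have hys : y ∆ s ∈ PiNat.cylinder x l' := by
    intro j hj
    by_cases hjl : j < l
    · simp only [Pi.symmDiff_apply, s, if_pos hjl, symmDiff_symmDiff_cancel_left]
    · simp only [Pi.symmDiff_apply, s, if_neg hjl, symmDiff_bot, hy j ⟨not_lt.1 hjl, hj⟩]
  simpa only [mem_preimage, symmDiff_symmDiff_cancel_right] using mem_iInter₂.1 (hl' hys) s hs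

end CantorSpace

/-- A Silver forcing condition: a partial function from `ℕ` to `Bool` which is undefined (encoded
as `none`) at infinitely many arguments, called free. -/
structure SilverCond where
  val : ℕ → Option Bool
  infinite_free : {j | val j = none}.Infinite

namespace SilverCond

open Filter Topology symmDiff

instance : CoeFun SilverCond fun _ => ℕ → Option Bool := ⟨val⟩

theorem exists_of_blocks {M : ℕ → ℕ} (hM : StrictMono M) (v₀ : ℕ → Option Bool)
    (v : ℕ → ℕ → Option Bool) (hfree : ∀ n, ∃ e ∈ Ico (M n) (M (n + 1)), v n e = none) :
    ∃ q : SilverCond, (∀ j < M 0, q j = v₀ j) ∧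
      ∀ n, ∀ j ∈ Ico (M n) (M (n + 1)), q j = v n j := by
  obtain ⟨w, hw₀, hw⟩ := exists_glue hM v₀ v
  refine ⟨⟨w, infinite_of_forall_exists_gt fun a => ?_⟩, hw₀, hw⟩
  obtain ⟨e, he, hve⟩ := hfree (a + 1)
  exact ⟨e, (hw _ e he).trans hve, Nat.lt_of_succ_le ((hM.id_le _).trans he.1)⟩

/-- `q` extends `p` on the coordinates from `m` on. -/
def ExtendsFrom (m : ℕ) (p q : SilverCond) : Prop := ∀ j ≥ m, ∀ b ∈ p j, b ∈ q j

theorem ExtendsFrom.refl (m : ℕ) (p : SilverCond) : ExtendsFrom m p p := fun _ _ _ hb => hb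

theorem ExtendsFrom.trans {m : ℕ} {p q r : SilverCond} (hpq : ExtendsFrom m p q)
    (hqr : ExtendsFrom m q r) : ExtendsFrom m p r :=
  fun j hj b hb => hqr j hj b (hpq j hj b hb)

theorem ExtendsFrom.mono {m m' : ℕ} {p q : SilverCond} (h : ExtendsFrom m p q) (hm : m ≤ m') :
    ExtendsFrom m' p q :=
  fun j hj => h j (hm.trans hj)

/-- Conditions are ordered by almost extension: larger conditions carry more information. -/
instance : Preorder SilverCond where
  le p q := ∃ m, ExtendsFrom m p q
  le_refl p := ⟨0, .refl 0 p⟩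
  le_trans := fun _ _ _ ⟨m, hpq⟩ ⟨m', hqr⟩ =>
    ⟨max m m', (hpq.mono (le_max_left m m')).trans (hqr.mono (le_max_right m m'))⟩

theorem ExtendsFrom.le {m : ℕ} {p q : SilverCond} (h : ExtendsFrom m p q) : p ≤ q := ⟨m, h⟩

theorem exists_free_ge (p : SilverCond) (m : ℕ) : ∃ e ≥ m, p e = none :=
  have ⟨e, he, hme⟩ := p.infinite_free.exists_gt m
  ⟨e, hme.le, he⟩

theorem exists_fusion {M : ℕ → ℕ} (hM : StrictMono M) {p : ℕ → SilverCond}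
    (hp : ∀ n, ExtendsFrom (M (n + 1)) (p n) (p (n + 1)))
    (hfree : ∀ n, ∃ e ∈ Ico (M n) (M (n + 1)), p n e = none) :
    ∃ q, ∀ i, ExtendsFrom (M i) (p i) q := by
  obtain ⟨q, -, hq⟩ := exists_of_blocks hM (p 0) (fun n => p n) hfree
  have hchain : ∀ i n, i ≤ n → ExtendsFrom (M n) (p i) (p n) := by
    intro i n hin
    induction n, hin using Nat.le_induction with
    | base => exact .refl _ _
    | succ n _ ih => exact (ih.mono (hM.monotone n.le_succ)).trans (hp n)
  refine ⟨q, fun i j hj b hb => ?_⟩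
  obtain ⟨n, hn⟩ := exists_mem_Ico_succ hM ((hM.monotone (Nat.zero_le i)).trans hj)
  rw [hq n j hn]
  exact hchain i n (le_of_mem_Ico_succ hM hj hn) j hn.1 b hb

theorem exists_upper_bound_seq {p : ℕ → SilverCond} (hp : Monotone p) : ∃ q, ∀ i, p i ≤ q := by
  choose N hN using fun n => hp (Nat.le_succ n)
  obtain ⟨M, -, hM⟩ := exists_seq_succ (σ := ℕ)
    (R := fun n m m' => N n ≤ m' ∧ ∃ e ∈ Ico m m', p n e = none)
    (fun n m =>
      have ⟨e, hme, he⟩ := (p n).exists_free_ge m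
      ⟨max (N n) (e + 1), le_max_left _ _, e, ⟨hme, lt_max_of_lt_right e.lt_succ_self⟩, he⟩) 0
  have hmono : StrictMono M := strictMono_nat_of_lt_succ fun n =>
    have ⟨_, he, _⟩ := (hM n).2
    he.1.trans_lt he.2
  obtain ⟨q, hq⟩ := exists_fusion hmono (fun n => (hN n).mono (hM n).1) fun n => (hM n).2
  exact ⟨q, fun i => (hq i).le⟩

/-- The points of the Cantor space that agree with `p` on its domain from `m` on. -/
def cube (p : SilverCond) (m : ℕ) : Set Cantor := {x | ∀ j ≥ m, ∀ b ∈ p j, x j = b}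

/-- The points of the Cantor space that agree with `p` almost everywhere on its domain. -/
def almostCube (p : SilverCond) : Set Cantor := ⋃ m, p.cube m

theorem cube_mono (p : SilverCond) : Monotone p.cube :=
  fun _ _ hm _ hx j hj => hx j (hm.trans hj)

theorem ExtendsFrom.cube_subset {m : ℕ} {p q : SilverCond} (h : ExtendsFrom m p q) :
    q.cube m ⊆ p.cube m :=
  fun _ hx j hj b hb => hx j hj b (h j hj b hb)

theorem almostCube_antitone : Antitone almostCube := by
  rintro p q ⟨m, h⟩
  refine iUnion_subset fun m' => subset_iUnion_of_subset (max m m') ?_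
  exact (q.cube_mono (le_max_right m m')).trans (h.mono (le_max_left m m')).cube_subset

theorem tailClass_subset_almostCube {p : SilverCond} {x : Cantor} (hx : x ∈ p.cube 0) :
    tailClass x ⊆ p.almostCube :=
  iUnion_mono fun _ _ hy j hj b hb => (hy j hj).trans (hx j (Nat.zero_le j) b hb)

/-- The total function with the values of `w` at the free arguments of `p`. -/
def fill (p : SilverCond) (w : Cantor) : Cantor := fun j => (p j).getD (w j)

theorem fill_mem_cube (p : SilverCond) (w : Cantor) : p.fill w ∈ p.cube 0 := by
  intro j _ b hb
  simp only [fill, Option.mem_def.1 hb, Option.getD_some]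

theorem mem_tailSet_fill {p : SilverCond} {m : ℕ} {y : Cantor} (hy : y ∈ p.cube m) :
    y ∈ tailSet m (p.fill y) := by
  intro j hj
  cases hpj : p j with
  | none => simp only [fill, hpj, Option.getD_none]
  | some b => simp only [fill, hpj, Option.getD_some, hy j hj b hpj]

theorem continuous_fill (p : SilverCond) : Continuous p.fill := by
  refine continuous_pi fun j => ?_
  cases hpj : p j with
  | none => simpa only [fill, hpj, Option.getD_none] using continuous_apply j
  | some b => simpa only [fill, hpj, Option.getD_some] using continuous_const

theorem isNowhereDense_fill_preimage_singleton (p : SilverCond) (c : Cantor) :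
    IsNowhereDense (p.fill ⁻¹' {c}) := by
  rw [(isClosed_singleton.preimage p.continuous_fill).isNowhereDense_iff,
    eq_empty_iff_forall_notMem]
  intro w hw
  obtain ⟨l, hl⟩ := exists_cylinder_subset isOpen_interior hw
  obtain ⟨e, hle, he⟩ := p.exists_free_ge l
  have hflip : Function.update w e (!w e) ∈ PiNat.cylinder w l := fun j hj =>
    Function.update_of_ne (hj.trans_le hle).ne _ _
  have heq : p.fill (Function.update w e (!w e)) = p.fill w :=
    (interior_subset (hl hflip)).trans (interior_subset hw).symm
  simpa only [fill, he, Option.getD_none, Function.update_self, Bool.not_eq_self]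
    using congrFun heq e

theorem isMeagre_fill_preimage (p : SilverCond) {R : Set Cantor} (hR : R.Countable) :
    IsMeagre (p.fill ⁻¹' R) := by
  rw [← biUnion_preimage_singleton]
  exact isMeagre_biUnion hR fun c _ => (p.isNowhereDense_fill_preimage_singleton c).isMeagre

theorem exists_mem_cube_notMem (p : SilverCond) {R : Set Cantor} (hR : R.Countable) :
    ∃ x ∈ p.cube 0, x ∉ R := by
  by_contra! h
  exact not_isMeagre_of_isOpen isOpen_univ univ_nonempty
    ((p.isMeagre_fill_preimage hR).mono fun w _ => h (p.fill w) (p.fill_mem_cube w))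

theorem exists_cube_subset_cylinder_inter {G : ℕ → Set Cantor} (hG : ∀ n, IsOpen (G n))
    (hGd : ∀ n, Dense (G n)) (x : Cantor) (l : ℕ) {Z : Set ℕ} (hZ : Z.Infinite) :
    ∃ q : SilverCond, {j | q j = none} ⊆ Z ∧ q.cube 0 ⊆ PiNat.cylinder x l ∩ ⋂ n, G n := by
  choose l' pat hpat using fun n l => exists_pattern (hG n) (hGd n) l
  obtain ⟨M, rfl, hM⟩ := exists_seq_succ (σ := ℕ)
    (R := fun n m m' => ∃ e ∈ Z, e ∈ Ico m m' ∧ l' n (e + 1) ≤ m')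
    (fun n m =>
      have ⟨e, heZ, hme⟩ := hZ.exists_gt m
      ⟨max (e + 1) (l' n (e + 1)), e, heZ, ⟨hme.le, lt_max_of_lt_left e.lt_succ_self⟩,
        le_max_right _ _⟩) l
  choose e heZ he hl' using hM
  have hmono : StrictMono M := strictMono_nat_of_lt_succ fun n => (he n).1.trans_lt (he n).2
  obtain ⟨q, hq₀, hq⟩ := exists_of_blocks hmono (fun j => some (x j))
    (fun n j => if j = e n then none else some (pat n (e n + 1) j))
    (fun n => ⟨e n, he n, if_pos rfl⟩)
  refine ⟨q, fun j hj => ?_, fun y hy => ⟨fun j hj => ?_, mem_iInter.2 fun n => ?_⟩⟩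
  · have hMj : M 0 ≤ j := by
      by_contra! hlt
      exact Option.some_ne_none _ ((hq₀ j hlt).symm.trans hj)
    obtain ⟨n, hn⟩ := exists_mem_Ico_succ hmono hMj
    have hje : j = e n := by
      by_contra hne
      exact Option.some_ne_none _ (((hq n j hn).trans (if_neg hne)).symm.trans hj)
    exact hje ▸ heZ n
  · exact hy j (Nat.zero_le j) _ (hq₀ j hj)
  · refine hpat n (e n + 1) y fun j hj => hy j (Nat.zero_le j) _ ?_
    have hjn : j ∈ Ico (M n) (M (n + 1)) :=
      ⟨(he n).1.trans (Nat.le_of_succ_le hj.1), hj.2.trans_le (hl' n)⟩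
    exact (hq n j hjn).trans (if_neg (Nat.lt_of_succ_le hj.1).ne')

theorem exists_cube_subset_of_not_isMeagre {D : Set Cantor} (hD : MeasurableSet D)
    (hmeagre : ¬ IsMeagre D) {Z : Set ℕ} (hZ : Z.Infinite) :
    ∃ q : SilverCond, {j | q j = none} ⊆ Z ∧ q.cube 0 ⊆ D := by
  obtain ⟨u, hu, hDu⟩ := hD.residualEq_isOpen
  obtain ⟨t, ht, htG, htd⟩ := mem_residual.1 hDu.mem_iff
  obtain ⟨x, hx⟩ : u.Nonempty := by
    rw [nonempty_iff_ne_empty]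
    rintro rfl
    exact hmeagre (hDu.mem_iff.mono fun w hw => hw.not.2 (notMem_empty w))
  obtain ⟨l, hl⟩ := exists_cylinder_subset hu hx
  obtain ⟨G, hG, rfl⟩ := htG.eq_iInter_nat
  obtain ⟨q, hqZ, hq⟩ := exists_cube_subset_cylinder_inter hG
    (fun n => htd.mono (iInter_subset _ _)) x l hZ
  exact ⟨q, hqZ, fun y hy => (ht (hq hy).2).2 (hl (hq hy).1)⟩

theorem measurableSet_tailSet_fill_subset (p : SilverCond) (m : ℕ) {V : Set Cantor}
    (hV : MeasurableSet V) : MeasurableSet {w | tailSet m (p.fill w) ⊆ V} := by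
  have heq : {w | tailSet m (p.fill w) ⊆ V} = ⋂ s ∈ tailSet m ⊥, (fun w => p.fill w ∆ s) ⁻¹' V := by
    ext w
    simp only [mem_ofPred_eq, tailSet_eq_image_symmDiff m (p.fill w), subset_def, forall_mem_image,
      mem_iInter, mem_preimage]
  rw [heq]
  exact .biInter (tailSet_finite m ⊥).countable fun s _ =>
    ((continuous_symmDiff_right s).comp p.continuous_fill).measurable hV

-- Filling in `p` turns the hypothesis into a cover of a comeagre set by countably many Borel sets;
-- one of them is non-meagre and therefore contains the cube of a condition.
theorem exists_extendsFrom_cube_subset (p : SilverCond) {F R : Set Cantor} (hR : R.Countable)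
    {U : ℕ → Set Cantor} (hU : ∀ k, MeasurableSet (U k)) (m : ℕ)
    (H : ∀ x ∈ p.cube 0, Disjoint R (tailClass x) → ∃ k, F ∪ tailSet m x ⊆ U k) :
    ∃ q, ExtendsFrom 0 p q ∧ ∃ k, F ∪ q.cube m ⊆ U k := by
  let D : ℕ → Set Cantor := fun k => {_w | F ⊆ U k} ∩ {w | tailSet m (p.fill w) ⊆ U k}
  have hD : ∀ k, MeasurableSet (D k) := fun k =>
    (MeasurableSet.const _).inter (p.measurableSet_tailSet_fill_subset m (hU k))
  obtain ⟨k, hk⟩ : ∃ k, ¬ IsMeagre (D k) := by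
    by_contra! hmeagre
    have hbad : IsMeagre (p.fill ⁻¹' ⋃ r ∈ R, tailClass r) :=
      p.isMeagre_fill_preimage (hR.biUnion fun r _ => tailClass_countable r)
    refine not_isMeagre_of_isOpen isOpen_univ univ_nonempty
      (((isMeagre_iUnion hmeagre).union hbad).mono fun w _ => ?_)
    refine or_iff_not_imp_right.2 fun hw => mem_iUnion.2 ?_
    have hdisj : Disjoint R (tailClass (p.fill w)) := disjoint_left.2 fun r hr hrw =>
      hw (mem_iUnion₂.2 ⟨r, hr, mem_tailClass_comm.1 hrw⟩)
    exact (H _ (p.fill_mem_cube w) hdisj).imp fun k => union_subset_iff.1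
  obtain ⟨q, hqp, hqD⟩ := exists_cube_subset_of_not_isMeagre (hD k) hk p.infinite_free
  let pq : SilverCond := ⟨fun j => (p j).or (q j), q.infinite_free.mono fun j hj =>
    Option.or_eq_none_iff.2 ⟨hqp hj, hj⟩⟩
  have hfill : ∀ y, pq.fill y = p.fill (q.fill y) := fun y => funext fun j => by
    cases hpj : p j <;> simp [fill, pq, hpj]
  refine ⟨pq, fun j _ b hb => by simp [pq, Option.mem_def.1 hb], k, union_subset ?_ fun y hy => ?_⟩
  · exact (hqD (q.fill_mem_cube ⊥)).1
  · exact (hqD (q.fill_mem_cube y)).2 (hfill y ▸ mem_tailSet_fill hy)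

theorem exists_le_gammaSelectable (p : SilverCond) {Q R : Set Cantor} (hQ : Q.Countable)
    (hR : R.Countable) {U : ℕ → ℕ → Set Cantor} (hU : ∀ n k, MeasurableSet (U n k))
    (H : ∀ x ∈ p.cube 0, Disjoint R (tailClass x) → OmegaRows U (Q ∪ tailClass x)) :
    ∃ q, p ≤ q ∧ GammaSelectable U (Q ∪ q.almostCube) := by
  obtain ⟨F, hF, hFQ⟩ := exists_finite_exhaustion hQ
  have hstep : ∀ (n : ℕ) (s : {r // ExtendsFrom 0 p r} × ℕ),
      ∃ t : {r // ExtendsFrom 0 p r} × ℕ, ExtendsFrom 0 s.1.1 t.1 ∧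
        (∃ e ∈ Ico s.2 t.2, s.1.1 e = none) ∧ ∃ k, F n ∪ t.1.1.cube t.2 ⊆ U n k := by
    rintro n ⟨⟨r, hr⟩, m⟩
    obtain ⟨e, hme, he⟩ := r.exists_free_ge m
    obtain ⟨q, hrq, hq⟩ := r.exists_extendsFrom_cube_subset hR (hU n) (e + 1)
      fun x hx hxR => H x (hr.cube_subset hx) hxR n _
        (union_subset_union (hF n).2 (subset_iUnion (fun m => tailSet m x) (e + 1)))
        ((hF n).1.union (tailSet_finite _ _))
    exact ⟨(⟨q, hr.trans hrq⟩, e + 1), hrq, ⟨e, ⟨hme, e.lt_succ_self⟩, he⟩, hq⟩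
  obtain ⟨s, -, hs⟩ := exists_seq_succ hstep (⟨p, .refl 0 p⟩, 0)
  choose hext hfree g hg using hs
  have hmono : StrictMono fun n => (s n).2 := strictMono_nat_of_lt_succ fun n =>
    have ⟨_, he, _⟩ := hfree n
    he.1.trans_lt he.2
  obtain ⟨q, hq⟩ := exists_fusion (p := fun n => (s n).1) hmono
    (fun n => (hext n).mono (Nat.zero_le _)) hfree
  refine ⟨q, (s 0).1.2.le.trans (hq 0).le, g, fun y hy => ?_⟩
  rcases hy with hy | hy
  · exact (hFQ y hy).mono fun n hn => hg n (Or.inl hn)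
  · obtain ⟨m, hm⟩ := mem_iUnion.1 hy
    filter_upwards [eventually_ge_atTop m] with n hn
    have hmn : m ≤ (s (n + 1)).2 := hn.trans (n.le_succ.trans (hmono.id_le _))
    exact hg n (Or.inr ((hq (n + 1)).cube_subset (q.cube_mono hmn hm)))

-- If `exists_le_gammaSelectable` does not apply, adjoining a whole tail class to `Q` destroys the
-- ω-cover property of some row.
theorem exists_le_omegaRows_imp_gammaSelectable (p : SilverCond) {Q R : Set Cantor}
    (hQ : Q.Countable) (hR : R.Countable) {U : ℕ → ℕ → Set Cantor}
    (hU : ∀ n k, MeasurableSet (U n k)) :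
    ∃ q, p ≤ q ∧ ∃ P ⊆ p.almostCube, P.Countable ∧ Disjoint R P ∧
      (OmegaRows U (Q ∪ P) → GammaSelectable U (Q ∪ P ∪ q.almostCube)) := by
  by_cases H : ∀ x ∈ p.cube 0, Disjoint R (tailClass x) → OmegaRows U (Q ∪ tailClass x)
  · obtain ⟨q, hpq, hq⟩ := p.exists_le_gammaSelectable hQ hR hU H
    exact ⟨q, hpq, ∅, empty_subset _, countable_empty, disjoint_empty R, fun _ => by
      rwa [union_empty]⟩
  · push Not at H
    obtain ⟨x, hx, hxR, hrows⟩ := H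
    exact ⟨p, le_rfl, tailClass x, tailClass_subset_almostCube hx, tailClass_countable x, hxR,
      fun h => absurd h hrows⟩

end SilverCond

section SigmaClosed

open Cardinal

universe u

theorem exists_linearOrder_countable_Iio {J : Type u} (hJ : #J ≤ ℵ₁) :
    ∃ _ : LinearOrder J, WellFoundedLT J ∧ ∀ a : J, (Iio a).Countable := by
  obtain ⟨_, hwf, hord⟩ := exists_ord_eq_type_lt J
  refine ⟨inferInstance, hwf, fun a => ?_⟩
  rw [← le_aleph0_iff_set_countable, ← lt_aleph_one_iff]
  exact (mk_Iio_lt a hord).trans_le hJ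

/-- In a σ-closed preorder every increasing sequence has an upper bound. This is the usual notion
for forcing posets, with larger elements as the stronger conditions. -/
def IsSigmaClosed (P : Type*) [Preorder P] : Prop :=
  ∀ f : ℕ → P, Monotone f → BddAbove (range f)

variable {P : Type*} [Preorder P]

theorem IsSigmaClosed.bddAbove_range [Nonempty P] (hP : IsSigmaClosed P) {ι : Type*} [Countable ι]
    {f : ι → P} (hf : Directed (· ≤ ·) f) : BddAbove (range f) := by
  rcases isEmpty_or_nonempty ι with _ | _
  · exact range_eq_empty f ▸ bddAbove_empty
  · have := Encodable.ofCountable ι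
    inhabit ι
    obtain ⟨q, hq⟩ := hP _ hf.sequence_mono
    exact ⟨q, forall_mem_range.2 fun a => (hf.le_sequence a).trans (hq (mem_range_self _))⟩

theorem IsSigmaClosed.exists_monotone_generic [Nonempty P] (hP : IsSigmaClosed P) {J : Type*}
    [LinearOrder J] [WellFoundedLT J] (hJ : ∀ a : J, (Iio a).Countable) {D : J → Set P}
    (hD : ∀ a, IsCofinal (D a)) : ∃ G : J → P, Monotone G ∧ ∀ a, G a ∈ D a := by
  let G : J → P := wellFounded_lt.fix fun a prev =>
    Classical.epsilon fun t => t ∈ D a ∧ ∀ b, ∀ hb : b < a, prev b hb ≤ t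
  have hG : ∀ a, G a = Classical.epsilon fun t => t ∈ D a ∧ ∀ b < a, G b ≤ t :=
    fun a => wellFounded_lt.fix_eq _ a
  have hspec : ∀ a, G a ∈ D a ∧ ∀ b < a, G b ≤ G a := by
    intro a
    induction a using WellFoundedLT.induction with
    | ind a ih =>
      have hmono : Monotone fun b : Iio a => G b := monotone_iff_forall_lt.2 fun b c hbc =>
        (ih c c.2).2 b hbc
      have := (hJ a).to_subtype
      obtain ⟨s, hs⟩ := hP.bddAbove_range hmono.directed_le
      obtain ⟨t, ht, hst⟩ := hD a s
      rw [hG a]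
      exact Classical.epsilon_spec (p := fun t => t ∈ D a ∧ ∀ b < a, G b ≤ t)
        ⟨t, ht, fun b hb => (hs (mem_range_self (⟨b, hb⟩ : Iio a))).trans hst⟩
  exact ⟨G, monotone_iff_forall_lt.2 fun b a hba => (hspec a).2 b hba, fun a => (hspec a).1⟩

theorem IsSigmaClosed.exists_directed_generic [Nonempty P] (hP : IsSigmaClosed P) {J : Type*}
    (hJ : #J ≤ ℵ₁) {D : J → Set P} (hD : ∀ j, IsCofinal (D j)) :
    ∃ G : J → P, Directed (· ≤ ·) G ∧ ∀ j, G j ∈ D j := by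
  obtain ⟨_, _, hcount⟩ := exists_linearOrder_countable_Iio hJ
  obtain ⟨G, hmono, hG⟩ := hP.exists_monotone_generic hcount hD
  exact ⟨G, hmono.directed_le, hG⟩

end SigmaClosed

section Construction

open Cardinal

/-- A countable approximation to a pair of sets, indexed by `Bool`: countably many points of each
set, and a Silver condition whose almost cube contains all points added later. -/
structure Stage where
  cond : SilverCond
  pts : Bool → Set Cantor
  countable_pts : ∀ i, (pts i).Countable
  disjoint_pts : ∀ i, Disjoint (pts i) (pts !i)

namespace Stage

instance : Preorder Stage where
  le s t := s.cond ≤ t.cond ∧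
    ∀ i, s.pts i ⊆ t.pts i ∧ t.pts i ⊆ s.pts i ∪ s.cond.almostCube
  le_refl _ := ⟨le_rfl, fun _ => ⟨subset_rfl, subset_union_left⟩⟩
  le_trans := fun s t _ hst htu => ⟨hst.1.trans htu.1, fun i => ⟨(hst.2 i).1.trans (htu.2 i).1,
    (htu.2 i).2.trans (union_subset (hst.2 i).2
      (subset_union_of_subset_right (SilverCond.almostCube_antitone hst.1) _))⟩⟩

instance : Nonempty Stage :=
  ⟨⟨⟨fun _ => none, by simpa using infinite_univ⟩, fun _ => ∅, fun _ => countable_empty,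
    fun _ => disjoint_bot_left⟩⟩

theorem isSigmaClosed : IsSigmaClosed Stage := by
  intro s hs
  obtain ⟨q, hq⟩ := SilverCond.exists_upper_bound_seq (p := fun n => (s n).cond)
    fun m n hmn => (hs hmn).1
  have hpts : ∀ i, Monotone fun n => (s n).pts i := fun i m n hmn => ((hs hmn).2 i).1
  have hdisj : ∀ i m n, Disjoint ((s m).pts i) ((s n).pts !i) := fun i m n =>
    ((s (max m n)).disjoint_pts i).mono (hpts i (le_max_left m n)) (hpts _ (le_max_right m n))
  refine ⟨⟨q, fun i => ⋃ n, (s n).pts i, fun i => countable_iUnion fun n => (s n).countable_pts i,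
    fun i => disjoint_iUnion_left.2 fun m => disjoint_iUnion_right.2 (hdisj i m)⟩, ?_⟩
  rintro _ ⟨m, rfl⟩
  refine ⟨hq m, fun i => ⟨subset_iUnion (fun n => (s n).pts i) m, iUnion_subset fun n => ?_⟩⟩
  rcases le_total m n with hmn | hnm
  · exact ((hs hmn).2 i).2
  · exact subset_union_of_subset_left (hpts i hnm) _

theorem exists_adjoin (s : Stage) (i : Bool) {q : SilverCond} (hq : s.cond ≤ q) {N : Set Cantor}
    (hN : N ⊆ s.cond.almostCube) (hcount : N.Countable) (hdisj : Disjoint (s.pts !i) N) :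
    ∃ t ≥ s, t.cond = q ∧ t.pts i = s.pts i ∪ N := by
  refine ⟨⟨q, fun j => s.pts j ∪ {x ∈ N | j = i}, fun j => (s.countable_pts j).union
    (hcount.mono (sep_subset _ _)), fun j => ?_⟩, ⟨hq, fun j => ⟨subset_union_left,
      union_subset_union_right _ ((sep_subset _ _).trans hN)⟩⟩, rfl, by simp⟩
  have := s.disjoint_pts j
  cases i <;> cases j <;> simp_all [disjoint_comm]

theorem isCofinal_gammaSelectable (i : Bool) {U : ℕ → ℕ → Set Cantor}
    (hU : ∀ n k, MeasurableSet (U n k)) :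
    IsCofinal {s : Stage | OmegaRows U (s.pts i) →
      GammaSelectable U (s.pts i ∪ s.cond.almostCube)} := by
  intro s
  obtain ⟨q, hq, N, hN, hcount, hdisj, hsel⟩ :=
    s.cond.exists_le_omegaRows_imp_gammaSelectable (s.countable_pts i) (s.countable_pts !i) hU
  obtain ⟨t, hst, rfl, ht⟩ := s.exists_adjoin i hq hN hcount hdisj
  exact ⟨t, show OmegaRows U (t.pts i) → _ from ht ▸ hsel, hst⟩

theorem isCofinal_not_separated (C : Set Cantor) :
    IsCofinal {s : Stage | (∃ x ∈ s.pts false, x ∉ C) ∨ ∃ x ∈ s.pts true, x ∈ C} := by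
  intro s
  obtain ⟨x, hx, hxs⟩ := s.cond.exists_mem_cube_notMem (countable_iUnion s.countable_pts)
  have hadjoin : ∀ i, ∃ t ≥ s, x ∈ t.pts i := fun i => by
    obtain ⟨t, hst, -, ht⟩ := s.exists_adjoin i le_rfl
      (singleton_subset_iff.2 (mem_iUnion.2 ⟨0, hx⟩)) (countable_singleton x)
      (disjoint_singleton_right.2 fun h => hxs (mem_iUnion.2 ⟨_, h⟩))
    exact ⟨t, hst, ht ▸ Or.inr rfl⟩
  by_cases hxC : x ∈ C
  · exact (hadjoin true).imp fun t ht => ⟨Or.inr ⟨x, ht.2, hxC⟩, ht.1⟩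
  · exact (hadjoin false).imp fun t ht => ⟨Or.inl ⟨x, ht.2, hxC⟩, ht.1⟩

end Stage

theorem mk_measurableSet_le_continuum (X : Type*) [MeasurableSpace X]
    [MeasurableSpace.CountablyGenerated X] : #{s : Set X // MeasurableSet s} ≤ 𝔠 := by
  obtain ⟨b, hb, rfl⟩ := MeasurableSpace.CountablyGenerated.isCountablyGenerated (α := X)
  exact MeasurableSpace.cardinal_measurableSet_le_continuum
    ((le_aleph0_iff_set_countable.2 hb).trans aleph0_le_continuum)

theorem Stage.exists_directed_generic (hCH : (𝔠 : Cardinal.{0}) = ℵ₁) :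
    ∃ (J : Type) (G : J → Stage), Directed (· ≤ ·) G ∧
      (∀ i U, (∀ n k, MeasurableSet (U n k)) → ∃ j, OmegaRows U ((G j).pts i) →
        GammaSelectable U ((G j).pts i ∪ (G j).cond.almostCube)) ∧
      ∀ C, MeasurableSet C →
        ∃ j, (∃ x ∈ (G j).pts false, x ∉ C) ∨ ∃ x ∈ (G j).pts true, x ∈ C := by
  let S := {s : Set Cantor // MeasurableSet s}
  let D : Bool × (ℕ → ℕ → S) ⊕ S → Set Stage := Sum.elim
    (fun j => {s | OmegaRows (fun n k => j.2 n k) (s.pts j.1) →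
      GammaSelectable (fun n k => j.2 n k) (s.pts j.1 ∪ s.cond.almostCube)})
    (fun C => {s | (∃ x ∈ s.pts false, x ∉ C.1) ∨ ∃ x ∈ s.pts true, x ∈ C.1})
  have hcard : #(Bool × (ℕ → ℕ → S) ⊕ S) ≤ ℵ₁ := by
    have hS : #S ≤ 𝔠 := mk_measurableSet_le_continuum Cantor
    have hmatrix : #(ℕ → ℕ → S) ≤ 𝔠 := calc
      _ = (#S ^ ℵ₀) ^ ℵ₀ := by simp
      _ ≤ (𝔠 ^ ℵ₀) ^ ℵ₀ := power_le_power_right (power_le_power_right hS)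
      _ = 𝔠 := by simp only [continuum_power_aleph0]
    have hbool : #Bool ≤ 𝔠 := mk_bool ▸ (nat_lt_continuum 2).le
    rw [← hCH, mk_sum, mk_prod, lift_id, lift_id, lift_id, lift_id]
    exact add_le_of_le aleph0_le_continuum
      (mul_le_of_le aleph0_le_continuum hbool hmatrix) hS
  obtain ⟨G, hdir, hG⟩ := isSigmaClosed.exists_directed_generic hcard (D := D) (Sum.rec
    (fun j => isCofinal_gammaSelectable j.1 fun n k => (j.2 n k).2)
    (fun C => isCofinal_not_separated C))
  exact ⟨_, G, hdir, fun i U hU => ⟨_, hG (.inl (i, fun n k => ⟨U n k, hU n k⟩))⟩,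
    fun C hC => ⟨_, hG (.inr ⟨C, hC⟩)⟩⟩

theorem exists_isBorelGammaSet_not_measurablySeparable (hCH : (𝔠 : Cardinal.{0}) = ℵ₁) :
    ∃ A B : Set Cantor, IsBorelGammaSet A ∧ IsBorelGammaSet B ∧ Disjoint A B ∧
      ¬ MeasureTheory.MeasurablySeparable A B := by
  obtain ⟨J, G, hdir, hsel, hsep⟩ := Stage.exists_directed_generic hCH
  let A : Bool → Set Cantor := fun i => ⋃ j, (G j).pts i
  have hpts : ∀ j i, (G j).pts i ⊆ A i := fun j i => subset_iUnion (fun j => (G j).pts i) j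
  have hA : ∀ j i, A i ⊆ (G j).pts i ∪ (G j).cond.almostCube := fun j i =>
    iUnion_subset fun k =>
      have ⟨l, hjl, hkl⟩ := hdir j k
      (hkl.2 i).1.trans (hjl.2 i).2
  have hgamma : ∀ i, IsBorelGammaSet (A i) := fun i U hU hrows =>
    have ⟨j, hj⟩ := hsel i U hU
    (hj (hrows.mono (hpts j i))).mono (hA j i)
  refine ⟨A false, A true, hgamma false, hgamma true, ?_, ?_⟩
  · refine disjoint_iUnion_left.2 fun j => disjoint_iUnion_right.2 fun k => ?_
    obtain ⟨l, hjl, hkl⟩ := hdir j k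
    exact ((G l).disjoint_pts false).mono (hjl.2 _).1 (hkl.2 _).1
  · rintro ⟨C, hAC, hCA, hC⟩
    obtain ⟨j, ⟨x, hx, hxC⟩ | ⟨x, hx, hxC⟩⟩ := hsep C hC
    · exact hxC (hAC (hpts j _ hx))
    · exact disjoint_left.1 hCA (hpts j _ hx) hxC

end Construction

section SplitCover

open Filter TopologicalSpace MeasureTheory

/-- The cover of `X` by the sets `(L ∩ φ⁻¹ C) ∪ (Lᶜ \ φ⁻¹ C)` with `C` clopen in `Z`. Members that
contain a given point of `L` and a given point of `Lᶜ` correspond to clopen sets separating their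
images. -/
def splitCover {X Z : Type*} [TopologicalSpace Z] (φ : X → Z) (L : Set X) : Set (Set X) :=
  range fun C : Clopens Z => {x | x ∈ L ↔ φ x ∈ C}

theorem not_forall_eventually_mem_of_mem_splitCover {X Z : Type*} [TopologicalSpace Z]
    [MeasurableSpace Z] [OpensMeasurableSpace Z] {φ : X → Z} {L : Set X}
    (hsep : ¬ MeasurablySeparable (φ '' L) (φ '' Lᶜ)) {V : ℕ → Set X}
    (hV : ∀ n, V n ∈ splitCover φ L) : ¬ ∀ x, ∀ᶠ n in atTop, x ∈ V n := by
  choose C hC using hV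
  obtain rfl := funext hC
  intro hmem
  refine hsep ⟨liminf (fun n => (C n : Set Z)) atTop, ?_, ?_,
    .measurableSet_liminf fun n => (C n).isClopen.isOpen.measurableSet⟩
  · refine image_subset_iff.2 fun x hx => mem_liminf_iff_eventually_mem.2 ?_
    exact (hmem x).mono fun n hn => hn.1 hx
  · refine disjoint_image_left.2 (disjoint_left.2 fun x hx hxC => ?_)
    obtain ⟨n, hn, hnC⟩ := ((hmem x).and (mem_liminf_iff_eventually_mem.1 hxC)).exists
    exact hx (hn.2 hnC)

theorem isOpen_of_mem_splitCover {X Z : Type*} [TopologicalSpace X] [TopologicalSpace Z]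
    {φ : X → Z} {L : Set X} (hφ : Continuous φ) (hL : IsClopen L) {U : Set X}
    (hU : U ∈ splitCover φ L) : IsOpen U := by
  obtain ⟨C, rfl⟩ := hU
  have heq : {x | x ∈ L ↔ φ x ∈ C} = L ∩ φ ⁻¹' C ∪ Lᶜ ∩ (φ ⁻¹' C)ᶜ :=
    ext fun x => iff_iff_and_or_not_and_not
  have hC : IsClopen (φ ⁻¹' C) := C.isClopen.preimage hφ
  change IsOpen {x | x ∈ L ↔ φ x ∈ C}
  rw [heq]
  exact ((hL.inter hC).union (hL.compl.inter hC.compl)).isOpen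

theorem exists_mem_splitCover_superset {X Z : Type*} [TopologicalSpace Z] [CompactSpace Z]
    [T2Space Z] [TotallyDisconnectedSpace Z] {φ : X → Z} {L : Set X}
    (hdisj : Disjoint (φ '' L) (φ '' Lᶜ)) {F : Set X} (hF : F.Finite) :
    ∃ U ∈ splitCover φ L, F ⊆ U := by
  have hdisjF : φ '' (F ∩ L) ⊆ (φ '' (F \ L))ᶜ := disjoint_compl_right_iff_subset.1
    (by simpa using hdisj.mono (image_mono inter_subset_right) (image_mono fun x hx => hx.2))
  obtain ⟨C, hC, hFC, hCF⟩ := exists_clopen_of_closed_subset_open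
    ((hF.inter_of_left L).image φ).isClosed (hF.sdiff.image φ).isClosed.isOpen_compl hdisjF
  refine ⟨_, ⟨⟨C, hC⟩, rfl⟩, fun x hx => ⟨fun hxL => hFC ⟨x, ⟨hx, hxL⟩, rfl⟩, fun hxC => ?_⟩⟩
  by_contra hxL
  exact hCF hxC ⟨x, ⟨hx, hxL⟩, rfl⟩

variable {X : Type} [TopologicalSpace X] {Z : Type*} [TopologicalSpace Z] [CompactSpace Z]
  [T2Space Z] [TotallyDisconnectedSpace Z] [SecondCountableTopology Z] [MeasurableSpace Z]
  [OpensMeasurableSpace Z] {φ : X → Z} {L : Set X}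

theorem splitCover_mem_openOmega (hφ : Continuous φ) (hL : IsClopen L)
    (hdisj : Disjoint (φ '' L) (φ '' Lᶜ)) (hsep : ¬ MeasurablySeparable (φ '' L) (φ '' Lᶜ)) :
    splitCover φ L ∈ OpenOmega X := by
  have : Countable (Clopens Z) := Clopens.countable_iff_secondCountable.2 inferInstance
  refine ⟨countable_range _, fun U => isOpen_of_mem_splitCover hφ hL,
    ⟨eq_univ_of_forall fun x => ?_, fun huniv => ?_⟩,
    fun F => exists_mem_splitCover_superset hdisj⟩
  · obtain ⟨U, hU, hxU⟩ := exists_mem_splitCover_superset hdisj (finite_singleton x)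
    exact ⟨U, hU, hxU rfl⟩
  · exact not_forall_eventually_mem_of_mem_splitCover hsep (fun _ => huniv) (by simp)

theorem not_binom_openOmega_openTau [Nonempty X] [MeasurableSpace X] [OpensMeasurableSpace X]
    (hφ : Continuous φ) (hL : IsClopen L) (hdisj : Disjoint (φ '' L) (φ '' Lᶜ))
    (hsep : ¬ MeasurablySeparable (φ '' L) (φ '' Lᶜ)) (hL₁ : IsBorelGammaSet L)
    (hL₂ : IsBorelGammaSet Lᶜ) : ¬ Binom (OpenOmega X) (OpenTau X) := by
  intro h
  obtain ⟨𝒱, h𝒱, hτ⟩ := h _ (splitCover_mem_openOmega hφ hL hdisj hsep)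
  obtain ⟨V, hV, hmem⟩ := exists_seq_of_mem_borelTau hL₁ hL₂ (union_compl_self L)
    (openTau_subset_borelTau hτ)
  exact not_forall_eventually_mem_of_mem_splitCover hsep (fun n => h𝒱 (hV n)) hmem

end SplitCover

section Reals

open Topology MeasureTheory Cardinal

theorem exists_isEmbedding_real : ∃ E : Cantor × Bool → ℝ, IsEmbedding E := by
  let cons : Cantor × Bool → Cantor := fun z n => n.casesOn z.2 z.1
  have hcont : Continuous cons := continuous_pi fun n => by
    cases n with
    | zero => exact continuous_snd
    | succ n => exact (continuous_apply n).comp continuous_fst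
  have hinj : Function.Injective cons := fun z z' h =>
    Prod.ext (funext fun n => congrFun h (n + 1)) (congrFun h 0)
  exact ⟨_, (IsEmbedding.subtypeVal.comp cantorSetHomeomorphNatToBool.symm.isEmbedding).comp
    (hcont.isClosedEmbedding hinj).isEmbedding⟩

theorem nonempty_of_not_measurablySeparable {Z : Type*} [MeasurableSpace Z] {A B : Set Z}
    (h : ¬ MeasurablySeparable A B) : A.Nonempty := by
  rw [nonempty_iff_ne_empty]
  rintro rfl
  exact h ⟨∅, subset_rfl, disjoint_empty B, .empty⟩

theorem not_binom_openOmega_openTau_of_range_eq {X : Type} [TopologicalSpace X] [MeasurableSpace X]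
    [OpensMeasurableSpace X] {Z : Type*} [TopologicalSpace Z] [CompactSpace Z] [T2Space Z]
    [TotallyDisconnectedSpace Z] [SecondCountableTopology Z] [MeasurableSpace Z]
    [OpensMeasurableSpace Z] {A B : Set Z} {ψ : X → Z × Bool} (hψ : Continuous ψ)
    (hrange : range ψ = A ×ˢ {false} ∪ B ×ˢ {true}) (hA : IsBorelGammaSet (ψ ⁻¹' (A ×ˢ {false})))
    (hB : IsBorelGammaSet (ψ ⁻¹' (B ×ˢ {true}))) (hdisj : Disjoint A B)
    (hsep : ¬ MeasurablySeparable A B) : ¬ Binom (OpenOmega X) (OpenTau X) := by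
  have hmem : ∀ x, (ψ x).1 ∈ A ∧ (ψ x).2 = false ∨ (ψ x).1 ∈ B ∧ (ψ x).2 = true :=
    fun x => (hrange ▸ mem_range_self x : ψ x ∈ A ×ˢ {false} ∪ B ×ˢ {true})
  have hL : ψ ⁻¹' (A ×ˢ {false}) = ψ ⁻¹' (Prod.snd ⁻¹' {false}) := by
    ext x
    rcases hmem x with ⟨hx, hi⟩ | ⟨hx, hi⟩ <;> simp [hx, hi]
  have hLc : (ψ ⁻¹' (A ×ˢ {false}))ᶜ = ψ ⁻¹' (B ×ˢ {true}) := by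
    ext x
    rcases hmem x with ⟨hx, hi⟩ | ⟨hx, hi⟩ <;> simp [hx, hi]
  have hφL : (fun x => (ψ x).1) '' (ψ ⁻¹' (A ×ˢ {false})) = A := by
    rw [← image_image Prod.fst ψ, image_preimage_eq_of_subset (hrange ▸ subset_union_left),
      fst_image_prod A (singleton_nonempty _)]
  have hφLc : (fun x => (ψ x).1) '' (ψ ⁻¹' (A ×ˢ {false}))ᶜ = B := by
    rw [hLc, ← image_image Prod.fst ψ, image_preimage_eq_of_subset (hrange ▸ subset_union_right),
      fst_image_prod B (singleton_nonempty _)]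
  have : Nonempty X :=
    (hφL ▸ nonempty_of_not_measurablySeparable hsep).of_image.to_type
  refine not_binom_openOmega_openTau (φ := fun x => (ψ x).1) (continuous_fst.comp hψ)
    (L := ψ ⁻¹' (A ×ˢ {false})) ?_ (by rwa [hφL, hφLc]) (by rwa [hφL, hφLc]) hA (hLc ▸ hB)
  rw [hL]
  exact ((isClopen_discrete _).preimage continuous_snd).preimage hψ

theorem exists_isBorelGammaSet_union_not_binom (hCH : (𝔠 : Cardinal.{0}) = ℵ₁) :
    ∃ A B : Set ℝ, IsBorelGammaSet A ∧ IsBorelGammaSet B ∧ (A ∪ B).Nonempty ∧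
      ¬ Binom (OpenOmega ↥(A ∪ B)) (OpenTau ↥(A ∪ B)) := by
  obtain ⟨A, B, hA, hB, hdisj, hsep⟩ := exists_isBorelGammaSet_not_measurablySeparable hCH
  obtain ⟨E, hE⟩ := exists_isEmbedding_real
  have himage : ∀ {S : Set Cantor} (i : Bool), IsBorelGammaSet S →
      IsBorelGammaSet (E '' (S ×ˢ {i})) := fun i hS => by
    rw [prod_singleton]
    exact (hS.image measurable_prodMk_right).image hE.continuous.measurable
  have hne : (A ×ˢ {false} : Set (Cantor × Bool)).Nonempty :=
    (nonempty_of_not_measurablySeparable hsep).prod (singleton_nonempty _)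
  refine ⟨_, _, himage false hA, himage true hB, (hne.image E).inl, ?_⟩
  rw [← image_union]
  let e := hE.homeomorphImage (A ×ˢ {false} ∪ B ×ˢ {true})
  have hpreimage : ∀ S, (fun x => (e.symm x : Cantor × Bool)) ⁻¹' S = Subtype.val ⁻¹' (E '' S) := by
    intro S
    ext x
    have hx : E (e.symm x) = x := congrArg Subtype.val (e.apply_symm_apply x)
    rw [mem_preimage, mem_preimage, ← hx, hE.injective.mem_set_image]
  refine not_binom_openOmega_openTau_of_range_eq (continuous_subtype_val.comp e.symm.continuous)
    ?_ ?_ ?_ hdisj hsep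
  · exact (e.symm.surjective.range_comp _).trans Subtype.range_coe
  · exact hpreimage _ ▸ (himage false hA).preimage_val (image_mono subset_union_left)
  · exact hpreimage _ ▸ (himage true hB).preimage_val (image_mono subset_union_right)

theorem continuum_eq_aleph_one_univ_zero (hCH : 𝔠 = ℵ₁) : (𝔠 : Cardinal.{0}) = ℵ₁ := by
  apply lift_injective
  rw [lift_continuum, hCH, lift_aleph, Ordinal.lift_one]

end Reals

/-- Under CH, there are sets of reals `A`, `B` satisfying S₁(B_Ω,B_Γ) whose
union does not satisfy binom(Ω,T). In particular S₁(T,Γ) ≠ S₁(Ω,Γ) and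
S₁(B_T,B_Γ) ≠ S₁(B_Ω,B_Γ). -/
theorem statement18 (hCH : Cardinal.continuum = Cardinal.aleph 1) :
    ∃ A B : Set ℝ,
      S1 (BorelOmega ↥A) (BorelGamma ↥A) ∧
      S1 (BorelOmega ↥B) (BorelGamma ↥B) ∧
      ¬ Binom (OpenOmega ↥(A ∪ B)) (OpenTau ↥(A ∪ B)) ∧
      (fun X : Set ℝ => S1 (OpenTau ↥X) (OpenGamma ↥X)) ≠
        (fun X : Set ℝ => S1 (OpenOmega ↥X) (OpenGamma ↥X)) ∧
      (fun X : Set ℝ => S1 (BorelTau ↥X) (BorelGamma ↥X)) ≠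
        (fun X : Set ℝ => S1 (BorelOmega ↥X) (BorelGamma ↥X)) := by
  obtain ⟨A, B, hA, hB, hne, hbinom⟩ :=
    exists_isBorelGammaSet_union_not_binom (continuum_eq_aleph_one_univ_zero hCH)
  have : Nonempty ↥(A ∪ B) := hne.to_subtype
  have hτ : S1 (BorelTau ↥(A ∪ B)) (BorelGamma ↥(A ∪ B)) :=
    s1_borelTau_borelGamma_of_union_eq_univ (hA.preimage_val subset_union_left)
      (hB.preimage_val subset_union_right) (Subtype.coe_preimage_self (A ∪ B))
  have hΩ : ¬ S1 (OpenOmega ↥(A ∪ B)) (OpenGamma ↥(A ∪ B)) :=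
    fun h => hbinom h.binom_openOmega_openTau
  refine ⟨A, B, hA.s1_borelOmega_borelGamma_coe, hB.s1_borelOmega_borelGamma_coe, hbinom,
    fun h => hΩ ?_, fun h => hΩ ?_⟩
  · exact (congrFun h (A ∪ B)).mp
      (hτ.openGamma_of_borelGamma openTau_subset_borelTau fun _ h𝒰 => h𝒰.2.1)
  · exact ((congrFun h (A ∪ B)).mp hτ).openGamma_of_borelGamma openOmega_subset_borelOmega
      fun _ h𝒰 => h𝒰.2.1

end TauCoverPaper
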